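/- arXiv:2410.23816 — 4 statements merged into one kernel-verified Lean document; each statement's English description precedes it below -/
import Mathlib

section
/- Let A ∈ ℝ^{n×n} be symmetric positive semidefinite, B ∈ ℝ^{n×n} symmetric positive definite, and let U ∈ ℝ^{n×n} be invertible with U^T·A·U = D = diag(λ_1,…,λ_n) where λ_1 ≤ … ≤ λ_n, and U^T·B·U = I_n. Fix 1 ≤ r < n, let U_2 ∈ ℝ^{n×r} be the last r columns of U, D_2 = diag(λ_{n−r+1},…,λ_n), and V = B·U_2. Let f, g be real-valued functions defined on {λ_{n−r+1},…,λ_n} with 1 + g(λ_k) > 0 for each k > n−r, and define Ā = A + V·f(D_2)·V^T and B̄ = B + V·g(D_2)·V^T. Then for each k = 1,…,n the k-th column u_k of U satisfies: Ā·u_k = λ_k·B̄·u_k if k ≤ n−r, and Ā·u_k = ((λ_k + f(λ_k))/(1 + g(λ_k)))·B̄·u_k if k > n−r. In particular the eigenvectors of (A,B) and (Ā,B̄) coincide. -/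
open Matrix

/-- **Global deflation preserves eigenvectors** (Theorem 4.3 of Voet et al.).
Let `A ⪰ 0` be symmetric, `B ≻ 0` symmetric, `U` invertible with `Uᵀ·A·U = diag(λ_1,…,λ_n)`
(`λ` ascending) and `Uᵀ·B·U = I`. Fix `1 ≤ r < n`, let `U₂` be the last `r` columns of `U`,
`D₂ = diag(λ_{n−r+1},…,λ_n)`, `V = B·U₂`, and for functions `f, g` with `1 + g(λ_k) > 0` for
`k > n − r`, set `Ā = A + V·f(D₂)·Vᵀ` and `B̄ = B + V·g(D₂)·Vᵀ`. Then every column `u_k` of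
`U` is a generalized eigenvector of `(Ā, B̄)`: with eigenvalue `λ_k` if `k ≤ n − r` and with
eigenvalue `(λ_k + f(λ_k))/(1 + g(λ_k))` if `k > n − r`. -/
theorem deflation_eigenpairs {n r : ℕ} (hr1 : 1 ≤ r) (hrn : r < n)
    (A B : Matrix (Fin n) (Fin n) ℝ) (hA : A.PosSemidef) (hB : B.PosDef)
    (U : Matrix (Fin n) (Fin n) ℝ) (hU : IsUnit U.det)
    (lam : Fin n → ℝ) (hlam : Monotone lam)
    (hUAU : Uᵀ * A * U = Matrix.diagonal lam)
    (hUBU : Uᵀ * B * U = 1)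
    (f g : ℝ → ℝ)
    (hg : ∀ k : Fin n, n - r ≤ (k : ℕ) → 0 < 1 + g (lam k))
    (emb : Fin r → Fin n) (hemb : ∀ j : Fin r, (emb j : ℕ) = n - r + (j : ℕ))
    (V : Matrix (Fin n) (Fin r) ℝ) (hV : V = B * U.submatrix id emb)
    (Abar Bbar : Matrix (Fin n) (Fin n) ℝ)
    (hAbar : Abar = A + V * Matrix.diagonal (fun j => f (lam (emb j))) * Vᵀ)
    (hBbar : Bbar = B + V * Matrix.diagonal (fun j => g (lam (emb j))) * Vᵀ) :
    ∀ k : Fin n,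
      ((k : ℕ) < n - r →
        Abar *ᵥ (fun i => U i k) = lam k • (Bbar *ᵥ fun i => U i k)) ∧
      (n - r ≤ (k : ℕ) →
        Abar *ᵥ (fun i => U i k) =
          ((lam k + f (lam k)) / (1 + g (lam k))) • (Bbar *ᵥ fun i => U i k)) := by
  have hBt : Bᵀ = B := by simpa using hB.isHermitian.eq
  have hUt : IsUnit (Uᵀ).det := by rwa [Matrix.det_transpose]
  have hAU : A * U = B * U * Matrix.diagonal lam := by
    have h : Uᵀ * (A * U) = Uᵀ * (B * U * Matrix.diagonal lam) := by
      rw [← Matrix.mul_assoc, hUAU, ← Matrix.mul_assoc, ← Matrix.mul_assoc, hUBU, Matrix.one_mul]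
    have h2 := congrArg (fun M => (Uᵀ)⁻¹ * M) h
    simpa only [Matrix.nonsing_inv_mul_cancel_left _ _ hUt] using h2
  intro k
  have hAu : A *ᵥ (fun i => U i k) = lam k • (B *ᵥ fun i => U i k) := by
    ext i
    have h := congrFun (congrFun hAU i) k
    rw [Matrix.mul_diagonal] at h
    simp only [Matrix.mul_apply] at h
    simp only [Matrix.mulVec, dotProduct, Pi.smul_apply, smul_eq_mul]
    rw [h, mul_comm]
  have hVu : Vᵀ *ᵥ (fun i => U i k) = fun j => if emb j = k then (1 : ℝ) else 0 := by
    ext j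
    have h := congrFun (congrFun hUBU (emb j)) k
    rw [Matrix.one_apply] at h
    rw [← h, hV, Matrix.transpose_mul, hBt]
    simp only [Matrix.mulVec, dotProduct, Matrix.mul_apply, Matrix.transpose_apply,
      Matrix.submatrix_apply, id]
  have hdef : ∀ w : Fin r → ℝ, (V * Matrix.diagonal w * Vᵀ) *ᵥ (fun i => U i k)
      = fun i => ∑ j, V i j * (w j * if emb j = k then (1 : ℝ) else 0) := by
    intro w
    rw [← Matrix.mulVec_mulVec, hVu, ← Matrix.mulVec_mulVec]
    ext i
    change ∑ j, V i j * (Matrix.diagonal w *ᵥ _) j = _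
    simp only [Matrix.mulVec_diagonal]
  subst hAbar hBbar
  rw [Matrix.add_mulVec, Matrix.add_mulVec, hAu, hdef, hdef]
  constructor
  · intro hk
    have hne : ∀ j, emb j ≠ k := by
      intro j hj
      have := hemb j
      rw [hj] at this
      omega
    ext i
    simp [hne]
  · intro hk
    obtain ⟨j0, hj0⟩ : ∃ j, emb j = k := by
      refine ⟨⟨k - (n - r), by omega⟩, ?_⟩
      apply Fin.ext
      rw [hemb]
      simp only
      omega
    have hiff : ∀ j, emb j = k ↔ j = j0 := by
      intro j
      constructor
      · intro h
        apply Fin.ext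
        have h1 := hemb j
        have h2 := hemb j0
        rw [h] at h1
        rw [hj0] at h2
        omega
      · rintro rfl
        exact hj0
    have hVc : ∀ i, V i j0 = (B *ᵥ fun i => U i k) i := by
      intro i
      rw [hV, ← hj0]
      simp [Matrix.mul_apply, Matrix.mulVec, dotProduct]
    have hpos := (hg k hk).ne'
    ext i
    simp only [hiff, Pi.add_apply, Pi.smul_apply, smul_eq_mul, mul_ite, mul_one, mul_zero,
      Finset.sum_ite_eq', Finset.sum_ite_eq, Finset.mem_univ, if_true, hVc, hj0]
    field_simp
end

section
/- Let A ∈ ℝ^{n×n} be symmetric positive semidefinite, B ∈ ℝ^{n×n} symmetric positive definite, and let U ∈ ℝ^{n×n} be invertible with U^T·A·U = D = diag(λ_1,…,λ_n), λ_1 ≤ … ≤ λ_n, and U^T·B·U = I_n. Fix 1 ≤ r < n and assume λ_{n−r} > 0. Let U_2 ∈ ℝ^{n×r} be the last r columns of U, V = B·U_2, and define the scaled mass matrix B̄ = B + V·g(D_2)·V^T with g(λ) = λ/λ_{n−r} − 1 and D_2 = diag(λ_{n−r+1},…,λ_n). Then the generalized eigenvalues of (A, B̄) listed in ascending order with multiplicity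 are λ̄_k = λ_k for k = 1,…,n−r and λ̄_k = λ_{n−r} for k = n−r+1,…,n. -/
open Matrix

/-- The eigenvalues of a symmetric real matrix listed in ascending order with multiplicity. -/
noncomputable def sortedEigs {n : ℕ} (M : Matrix (Fin n) (Fin n) ℝ) : Fin n → ℝ :=
  if h : M.IsHermitian then h.eigenvalues ∘ Tuple.sort h.eigenvalues else 0

-- The generalized eigenvalues `λ_1(A,B) ≤ … ≤ λ_n(A,B)`: the eigenvalues of
-- `B^{-1/2} A B^{-1/2}` in ascending order with multiplicity (`B` positive definite).
open Classical in
open scoped MatrixOrder in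
noncomputable def genEigs {n : ℕ} (A B : Matrix (Fin n) (Fin n) ℝ) : Fin n → ℝ :=
  if hB : B.PosDef then sortedEigs ((CFC.sqrt B)⁻¹ * A * (CFC.sqrt B)⁻¹) else 0

theorem sortedEigs_eq_aux {n : ℕ} (M W : Matrix (Fin n) (Fin n) ℝ) (mu : Fin n → ℝ)
    (hM : M.IsHermitian) (hW : IsUnit W.det) (h : M * W = W * Matrix.diagonal mu)
    (hmu : Monotone mu) : sortedEigs M = mu := by
  have hMW : M = W * (Matrix.diagonal mu * W⁻¹) := by
    rw [← Matrix.mul_assoc, ← h, Matrix.mul_assoc, Matrix.mul_nonsing_inv _ hW, Matrix.mul_one]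
  have hc : M.charpoly = (Matrix.diagonal mu).charpoly := by
    rw [hMW, Matrix.charpoly_mul_comm, Matrix.mul_assoc, Matrix.nonsing_inv_mul _ hW,
      Matrix.mul_one]
  have h1 := hM.roots_charpoly_eq_eigenvalues
  rw [hc, Matrix.charpoly_diagonal, Finset.prod_eq_multiset_prod] at h1
  have h0 : Multiset.map (fun i => Polynomial.X - Polynomial.C (mu i)) Finset.univ.val =
      Multiset.map (fun a => Polynomial.X - Polynomial.C a)
        (Multiset.map mu Finset.univ.val) := by
    rw [Multiset.map_map]
    rfl
  rw [h0, Polynomial.roots_multiset_prod_X_sub_C] at h1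
  have h2 : (List.ofFn mu).Perm (List.ofFn hM.eigenvalues) := by
    rw [← Multiset.coe_eq_coe]
    simpa [Fin.univ_val_map] using h1
  unfold sortedEigs
  rw [dif_pos hM, ← List.ofFn_inj]
  refine List.Perm.eq_of_sortedLE (Tuple.monotone_sort _).sortedLE_ofFn hmu.sortedLE_ofFn ?_
  exact (Equiv.Perm.ofFn_comp_perm _ _).trans h2.symm

open scoped MatrixOrder in
theorem genEigs_eq_aux {n : ℕ} (A B U : Matrix (Fin n) (Fin n) ℝ) (mu d lam : Fin n → ℝ)
    (hA : A.IsHermitian) (hU : IsUnit U.det)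
    (hUAU : Uᵀ * A * U = Matrix.diagonal lam) (hUBU : Uᵀ * B * U = Matrix.diagonal d)
    (hd : ∀ i, 0 < d i) (hdm : ∀ i, lam i = d i * mu i)
    (hmu : Monotone mu) : genEigs A B = mu := by
  have hUu : IsUnit U := (Matrix.isUnit_iff_isUnit_det U).2 hU
  have hB : B.PosDef := by
    rw [← hUu.posDef_star_left_conjugate_iff]
    have : star U = Uᵀ := by simp [Matrix.star_eq_conjTranspose]
    rw [this, hUBU]
    exact Matrix.PosDef.diagonal hd
  have hUT : IsUnit Uᵀ.det := by rwa [Matrix.det_transpose]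
  have hAU : A * U = B * U * Matrix.diagonal mu := by
    have : Uᵀ * (A * U) = Uᵀ * (B * U * Matrix.diagonal mu) := by
      rw [← Matrix.mul_assoc, hUAU, ← Matrix.mul_assoc, ← Matrix.mul_assoc, hUBU,
        Matrix.diagonal_mul_diagonal]
      congr 1
      funext i
      exact hdm i
    have h2 := congrArg (fun X => (Uᵀ)⁻¹ * X) this
    simpa only [Matrix.nonsing_inv_mul_cancel_left _ _ hUT] using h2
  unfold genEigs
  rw [dif_pos hB]
  have hB0 : (0 : Matrix (Fin n) (Fin n) ℝ) ≤ B := hB.posSemidef.nonneg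
  have hSS : CFC.sqrt B * CFC.sqrt B = B := CFC.sqrt_mul_sqrt_self B hB0
  have hSH : (CFC.sqrt B).IsHermitian :=
    (Matrix.nonneg_iff_posSemidef.1 (CFC.sqrt_nonneg B)).isHermitian
  generalize CFC.sqrt B = S at hSS hSH
  have hS : IsUnit S.det := by
    have := (Matrix.isUnit_iff_isUnit_det B).1 hB.isUnit
    rw [← hSS, Matrix.det_mul] at this
    exact isUnit_of_mul_isUnit_left this
  refine sortedEigs_eq_aux _ (S * U) mu ?_ ?_ ?_ hmu
  · have h1 := hSH.inv
    unfold Matrix.IsHermitian at *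
    rw [Matrix.conjTranspose_mul, Matrix.conjTranspose_mul, h1, hA, Matrix.mul_assoc]
  · rw [Matrix.det_mul]
    exact hS.mul hU
  · rw [Matrix.mul_assoc, Matrix.nonsing_inv_mul_cancel_left _ _ hS, Matrix.mul_assoc, hAU, ← hSS]
    simp only [Matrix.mul_assoc]
    rw [Matrix.nonsing_inv_mul_cancel_left _ _ hS]

/-- **Global deflation / mass scaling shaves off the top of the spectrum.**
Let `A ⪰ 0` symmetric, `B ≻ 0` symmetric, `U` invertible with `Uᵀ·A·U = diag(λ_1,…,λ_n)`
(`λ` ascending), `Uᵀ·B·U = I`, `1 ≤ r < n` and `λ_{n−r} > 0`. With `U₂` the last `r` columns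
of `U`, `V = B·U₂` and scaled mass matrix `B̄ = B + V·g(D₂)·Vᵀ` where `g(λ) = λ/λ_{n−r} − 1`,
the generalized eigenvalues of `(A, B̄)` in ascending order are `λ_k` for `k ≤ n − r` and
`λ_{n−r}` for `k > n − r`. -/
theorem deflation_truncates_spectrum {n r : ℕ} (hr1 : 1 ≤ r) (hrn : r < n)
    (A B : Matrix (Fin n) (Fin n) ℝ) (hA : A.PosSemidef) (hB : B.PosDef)
    (U : Matrix (Fin n) (Fin n) ℝ) (hU : IsUnit U.det)
    (lam : Fin n → ℝ) (hlam : Monotone lam)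
    (hUAU : Uᵀ * A * U = Matrix.diagonal lam)
    (hUBU : Uᵀ * B * U = 1)
    (hpos : 0 < lam ⟨n - r - 1, by omega⟩)
    (emb : Fin r → Fin n) (hemb : ∀ j : Fin r, (emb j : ℕ) = n - r + (j : ℕ))
    (V : Matrix (Fin n) (Fin r) ℝ) (hV : V = B * U.submatrix id emb)
    (Bbar : Matrix (Fin n) (Fin n) ℝ)
    (hBbar : Bbar = B +
      V * Matrix.diagonal (fun j => lam (emb j) / lam ⟨n - r - 1, by omega⟩ - 1) * Vᵀ) :
    ∀ k : Fin n,
      genEigs A Bbar k =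
        if (k : ℕ) < n - r then lam k else lam ⟨n - r - 1, by omega⟩ := by
  intro k
  set L := lam ⟨n - r - 1, by omega⟩ with hL
  have hle : ∀ i : Fin n, ¬ (i : ℕ) < n - r → L ≤ lam i := fun i hi =>
    hlam (by rw [Fin.le_def]; simp only; omega)
  have hge : ∀ i : Fin n, (i : ℕ) < n - r → lam i ≤ L := fun i hi =>
    hlam (by rw [Fin.le_def]; simp only; omega)
  have key : genEigs A Bbar = fun k : Fin n => if (k : ℕ) < n - r then lam k else L := by
    refine genEigs_eq_aux A Bbar U _ (fun i => if (i : ℕ) < n - r then 1 else lam i / L) lam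
      hA.isHermitian hU hUAU ?_ ?_ ?_ ?_
    · have hBT : Bᵀ = B := by simpa using hB.isHermitian.eq
      have hUV : Uᵀ * V = (1 : Matrix (Fin n) (Fin n) ℝ).submatrix id emb := by
        rw [hV, ← hUBU]
        ext i j
        simp only [← Matrix.mul_assoc]
        simp [Matrix.mul_apply]
      have hVU : Vᵀ * U = ((1 : Matrix (Fin n) (Fin n) ℝ).submatrix id emb)ᵀ := by
        rw [← hUV, Matrix.transpose_mul, Matrix.transpose_transpose]
      rw [hBbar, Matrix.mul_add, Matrix.add_mul, hUBU]
      have : ∀ G : Matrix (Fin r) (Fin r) ℝ,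
          Uᵀ * (V * G * Vᵀ) * U = (Uᵀ * V) * G * (Vᵀ * U) := by
        intro G
        simp only [Matrix.mul_assoc]
      rw [this, hUV, hVU]
      ext i j
      rw [Matrix.add_apply, Matrix.mul_apply]
      simp only [Matrix.mul_diagonal, Matrix.submatrix_apply, Matrix.transpose_apply, id,
        Matrix.one_apply, Matrix.diagonal_apply]
      by_cases hi : (i : ℕ) < n - r
      · have : ∀ x, i ≠ emb x := fun x hx => by
          have := hemb x
          rw [← hx] at this
          omega
        simp [this, hi]
      · have hx0 : i = emb ⟨i - (n - r), by omega⟩ := by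
          apply Fin.ext
          rw [hemb]
          simp only
          omega
        rw [Finset.sum_eq_single (⟨i - (n - r), by omega⟩ : Fin r)]
        · rw [← hx0]
          by_cases hij : i = j
          · subst hij
            simp [hi]
          · simp [hij, Ne.symm hij]
        · intro b _ hb
          have : i ≠ emb b := fun hx => hb (by
            apply Fin.ext
            have := hemb b
            rw [← hx] at this
            simp only
            omega)
          simp [this]
        · simp
    · intro i
      split_ifs with hi
      · exact one_pos
      · exact div_pos (hpos.trans_le (hle i hi)) hpos
    · intro i
      split_ifs with hi
      · simp
      · rw [div_mul_cancel₀ _ hpos.ne']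
    · intro i j hij
      have hij' : (i : ℕ) ≤ j := hij
      simp only
      split_ifs with h1 h2 h2
      · exact hlam hij
      · exact hge i h1
      · omega
      · exact le_rfl
  rw [key]
end

section
/- Let A = Σ_{e=1}^N L_e^T·A_e·L_e be an assembled finite element matrix where each element matrix A_e ∈ ℝ^{m×m} is symmetric positive semidefinite. Then: (1) max_e λ_max(A_e) ≤ λ_max(A) ≤ p_max · max_e λ_max(A_e), and (2) min_e λ_min(A_e) ≤ λ_min(A), where λ_min and λ_max denote the smallest and largest eigenvalue of a symmetric matrix. -/
open Matrix

/-- The smallest and largest eigenvalues of a symmetric matrix. -/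
noncomputable def lamMin {n : ℕ} (M : Matrix (Fin (n+1)) (Fin (n+1)) ℝ) : ℝ := sortedEigs M 0
noncomputable def lamMax {n : ℕ} (M : Matrix (Fin (n+1)) (Fin (n+1)) ℝ) : ℝ :=
  sortedEigs M (Fin.last n)

/-- The Boolean connectivity matrix `L_e` of an element whose local-to-global map is `σ`:
its rows are the standard basis vectors of `ℝ^n` selected by `σ`. -/
def elemL {ι : Type*} {n : ℕ} (σ : ι → Fin n) : Matrix ι (Fin n) ℝ :=
  Matrix.of fun i j => if σ i = j then 1 else 0

theorem quad_sum {n : ℕ} {M : Matrix (Fin n) (Fin n) ℝ} (h : M.IsHermitian) (x : Fin n → ℝ) :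
    ∃ c : Fin n → ℝ, x ⬝ᵥ x = ∑ i, c i ^ 2 ∧ x ⬝ᵥ (M *ᵥ x) = ∑ i, h.eigenvalues i * c i ^ 2 := by
  have hin : ∀ a b : Fin n → ℝ, inner ℝ (WithLp.toLp 2 a : EuclideanSpace ℝ (Fin n)) (WithLp.toLp 2 b) = a ⬝ᵥ b := by
    intro a b
    simp [EuclideanSpace.inner_eq_star_dotProduct, dotProduct_comm]
  refine ⟨fun i => inner ℝ (WithLp.toLp 2 x : EuclideanSpace ℝ (Fin n)) (h.eigenvectorBasis i), ?_, ?_⟩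
  · rw [← hin, ← h.eigenvectorBasis.sum_inner_mul_inner]
    refine Finset.sum_congr rfl fun i _ => ?_
    rw [real_inner_comm (WithLp.toLp 2 x), sq]
  · rw [← hin, ← h.eigenvectorBasis.sum_inner_mul_inner]
    refine Finset.sum_congr rfl fun i _ => ?_
    have : inner ℝ (h.eigenvectorBasis i) (WithLp.toLp 2 (M *ᵥ x) : EuclideanSpace ℝ (Fin n))
        = h.eigenvalues i * inner ℝ (WithLp.toLp 2 x : EuclideanSpace ℝ (Fin n)) (h.eigenvectorBasis i) := by
      have e : h.eigenvectorBasis i = WithLp.toLp 2 (⇑(h.eigenvectorBasis i)) := rfl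
      rw [e, hin, hin, dotProduct_mulVec, ← mulVec_transpose]
      have ht : Mᵀ = M := by simpa [IsHermitian] using h
      rw [ht, h.mulVec_eigenvectorBasis, smul_dotProduct, dotProduct_comm, smul_eq_mul]
    rw [this]; ring

theorem lamMax_spec {n : ℕ} {M : Matrix (Fin (n+1)) (Fin (n+1)) ℝ} (h : M.IsHermitian) :
    (∃ i, lamMax M = h.eigenvalues i) ∧ ∀ i, h.eigenvalues i ≤ lamMax M := by
  simp only [lamMax, sortedEigs, h, dif_pos]
  refine ⟨⟨_, rfl⟩, fun i => ?_⟩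
  have := Tuple.monotone_sort h.eigenvalues (Fin.le_last ((Tuple.sort h.eigenvalues).symm i))
  simpa using this

theorem lamMin_spec {n : ℕ} {M : Matrix (Fin (n+1)) (Fin (n+1)) ℝ} (h : M.IsHermitian) :
    (∃ i, lamMin M = h.eigenvalues i) ∧ ∀ i, lamMin M ≤ h.eigenvalues i := by
  simp only [lamMin, sortedEigs, h, dif_pos]
  refine ⟨⟨_, rfl⟩, fun i => ?_⟩
  have := Tuple.monotone_sort h.eigenvalues (Fin.zero_le ((Tuple.sort h.eigenvalues).symm i))
  simpa using this

theorem eig_attained {n : ℕ} {M : Matrix (Fin n) (Fin n) ℝ} (h : M.IsHermitian) (i : Fin n) :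
    ∃ x : Fin n → ℝ, x ⬝ᵥ x = 1 ∧ x ⬝ᵥ (M *ᵥ x) = h.eigenvalues i := by
  have h1 : (⇑(h.eigenvectorBasis i) : Fin n → ℝ) ⬝ᵥ ⇑(h.eigenvectorBasis i) = 1 := by
    have := h.eigenvectorBasis.orthonormal.1 i
    have h2 := real_inner_self_eq_norm_sq (h.eigenvectorBasis i)
    rw [this, EuclideanSpace.inner_eq_star_dotProduct] at h2
    simpa using h2
  refine ⟨_, h1, ?_⟩
  rw [h.mulVec_eigenvectorBasis, dotProduct_smul, h1]; simp

theorem quad_le {n : ℕ} {M : Matrix (Fin (n+1)) (Fin (n+1)) ℝ} (h : M.IsHermitian)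
    (x : Fin (n+1) → ℝ) : x ⬝ᵥ (M *ᵥ x) ≤ lamMax M * (x ⬝ᵥ x) := by
  obtain ⟨c, h1, h2⟩ := quad_sum h x
  rw [h1, h2, Finset.mul_sum]
  exact Finset.sum_le_sum fun i _ => mul_le_mul_of_nonneg_right ((lamMax_spec h).2 i) (sq_nonneg _)

theorem le_quad {n : ℕ} {M : Matrix (Fin (n+1)) (Fin (n+1)) ℝ} (h : M.IsHermitian)
    (x : Fin (n+1) → ℝ) : lamMin M * (x ⬝ᵥ x) ≤ x ⬝ᵥ (M *ᵥ x) := by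
  obtain ⟨c, h1, h2⟩ := quad_sum h x
  rw [h1, h2, Finset.mul_sum]
  exact Finset.sum_le_sum fun i _ => mul_le_mul_of_nonneg_right ((lamMin_spec h).2 i) (sq_nonneg _)

theorem elemL_mulVec {ι : Type*} {n : ℕ} (σ : ι → Fin n) (x : Fin n → ℝ) :
    elemL σ *ᵥ x = x ∘ σ := by
  ext i
  simp [elemL, mulVec, dotProduct]

theorem count_sum {m n : ℕ} (σ : Fin m → Fin n) (hσ : Function.Injective σ) (x : Fin n → ℝ) :
    (x ∘ σ) ⬝ᵥ (x ∘ σ) = ∑ i, if ∃ j, σ j = i then x i ^ 2 else 0 := by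
  classical
  rw [← Finset.sum_filter]
  have : (Finset.univ.filter fun i => ∃ j, σ j = i) = Finset.univ.image σ := by
    ext; simp
  rw [this, Finset.sum_image (fun a _ b _ hab => hσ hab)]
  simp [dotProduct, sq]

/-- **Eigenvalue bounds for assembled finite element matrices** (Fried, Theorem 1).
Let `A = Σ_e L_eᵀ·A_e·L_e` be an assembled matrix with each element matrix `A_e` symmetric
positive semidefinite, where each `L_e` has distinct standard basis vectors as rows
(`σ e` injective), each global index belongs to at least one element and to at most `p_max`
elements. Then `max_e λ_max(A_e) ≤ λ_max(A) ≤ p_max · max_e λ_max(A_e)` and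
`min_e λ_min(A_e) ≤ λ_min(A)`. -/
theorem assembled_eigenvalue_bounds {N m n pmax : ℕ} (hpmax : 0 < pmax)
    (σ : Fin (N+1) → Fin (m+1) → Fin (n+1))
    (hinj : ∀ e, Function.Injective (σ e))
    (hcover : ∀ i : Fin (n+1), ∃ e j, σ e j = i)
    (hp : ∀ i : Fin (n+1), (Finset.univ.filter fun e => ∃ j, σ e j = i).card ≤ pmax)
    (Ae : Fin (N+1) → Matrix (Fin (m+1)) (Fin (m+1)) ℝ)
    (hAe : ∀ e, (Ae e).PosSemidef)
    (A : Matrix (Fin (n+1)) (Fin (n+1)) ℝ)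
    (hA : A = ∑ e, (elemL (σ e))ᵀ * Ae e * elemL (σ e)) :
    (Finset.univ.sup' Finset.univ_nonempty fun e => lamMax (Ae e)) ≤ lamMax A ∧
    lamMax A ≤ (pmax : ℝ) * Finset.univ.sup' Finset.univ_nonempty (fun e => lamMax (Ae e)) ∧
    (Finset.univ.inf' Finset.univ_nonempty fun e => lamMin (Ae e)) ≤ lamMin A := by
  classical
  have hH : A.IsHermitian := by
    have : A.PosSemidef := by
      rw [hA]
      refine posSemidef_sum _ fun e _ => ?_
      simpa using (hAe e).conjTranspose_mul_mul_same (elemL (σ e))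
    exact this.1
  have hq : ∀ x, x ⬝ᵥ (A *ᵥ x) = ∑ e, (x ∘ σ e) ⬝ᵥ (Ae e *ᵥ (x ∘ σ e)) := by
    intro x
    rw [hA, sum_mulVec, dotProduct_sum]
    refine Finset.sum_congr rfl fun e _ => ?_
    rw [← mulVec_mulVec, ← mulVec_mulVec, mulVec_transpose, ← elemL_mulVec, dotProduct_comm,
      ← dotProduct_mulVec, dotProduct_comm]
  have hnn : ∀ e (y : Fin (m+1) → ℝ), 0 ≤ y ⬝ᵥ (Ae e *ᵥ y) := fun e y => by
    simpa using (hAe e).dotProduct_mulVec_nonneg y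
  have hmax0 : ∀ e, 0 ≤ lamMax (Ae e) := fun e => by
    obtain ⟨i, hi⟩ := (lamMax_spec (hAe e).1).1
    rw [hi]; exact (hAe e).eigenvalues_nonneg i
  have hmin0 : ∀ e, 0 ≤ lamMin (Ae e) := fun e => by
    obtain ⟨i, hi⟩ := (lamMin_spec (hAe e).1).1
    rw [hi]; exact (hAe e).eigenvalues_nonneg i
  have hcount : ∀ x : Fin (n+1) → ℝ, ∑ e, (x ∘ σ e) ⬝ᵥ (x ∘ σ e) =
      ∑ i, ((Finset.univ.filter fun e => ∃ j, σ e j = i).card : ℝ) * x i ^ 2 := by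
    intro x
    simp_rw [fun e => count_sum (σ e) (hinj e) x]
    rw [Finset.sum_comm]
    refine Finset.sum_congr rfl fun i _ => ?_
    rw [← Finset.sum_filter, Finset.sum_const, nsmul_eq_mul]
  have hxx : ∀ x : Fin (n+1) → ℝ, x ⬝ᵥ x = ∑ i, x i ^ 2 := fun x => by
    simp [dotProduct, sq]
  refine ⟨?_, ?_, ?_⟩
  · refine Finset.sup'_le _ _ fun e _ => ?_
    obtain ⟨i, hi⟩ := (lamMax_spec (hAe e).1).1
    obtain ⟨y, hy1, hy2⟩ := eig_attained (hAe e).1 i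
    rw [hi, ← hy2]
    let x : Fin (n+1) → ℝ := Function.extend (σ e) y 0
    have hxy : x ∘ σ e = y := funext fun j => (hinj e).extend_apply _ _ _
    have hx1 : x ⬝ᵥ x = 1 := by
      rw [← hy1, ← hxy, count_sum _ (hinj e), hxx]
      refine Finset.sum_congr rfl fun k _ => ?_
      split_ifs with hk
      · rfl
      · simp [x, Function.extend_apply' _ _ _ hk]
    have h1 := quad_le hH x
    rw [hx1, mul_one, hq] at h1
    refine le_trans ?_ h1
    have h2 := Finset.single_le_sum (f := fun e => (x ∘ σ e) ⬝ᵥ (Ae e *ᵥ (x ∘ σ e)))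
      (fun e _ => hnn e _) (Finset.mem_univ e)
    simpa only [hxy] using h2
  · set S := Finset.univ.sup' Finset.univ_nonempty (fun e => lamMax (Ae e)) with hS
    have hle : ∀ e, lamMax (Ae e) ≤ S := fun e =>
      Finset.le_sup' (fun e => lamMax (Ae e)) (Finset.mem_univ e)
    have hS0 : 0 ≤ S := (hmax0 0).trans (hle 0)
    obtain ⟨i, hi⟩ := (lamMax_spec hH).1
    obtain ⟨x, hx1, hx2⟩ := eig_attained hH i
    rw [hi, ← hx2, hq]
    calc _ ≤ ∑ e, S * ((x ∘ σ e) ⬝ᵥ (x ∘ σ e)) := by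
          refine Finset.sum_le_sum fun e _ => (quad_le (hAe e).1 _).trans ?_
          refine mul_le_mul_of_nonneg_right (hle e) ?_
          exact Finset.sum_nonneg fun j _ => mul_self_nonneg _
      _ = S * ∑ i, ((Finset.univ.filter fun e => ∃ j, σ e j = i).card : ℝ) * x i ^ 2 := by
          rw [← Finset.mul_sum, hcount]
      _ ≤ S * ∑ i, (pmax : ℝ) * x i ^ 2 := by
          refine mul_le_mul_of_nonneg_left (Finset.sum_le_sum fun i _ => ?_) hS0
          exact mul_le_mul_of_nonneg_right (by exact_mod_cast hp i) (sq_nonneg _)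
      _ = pmax * S := by
          rw [← Finset.mul_sum, ← hxx, hx1]; ring
  · set S := Finset.univ.inf' Finset.univ_nonempty (fun e => lamMin (Ae e)) with hS
    have hle : ∀ e, S ≤ lamMin (Ae e) := fun e =>
      Finset.inf'_le (fun e => lamMin (Ae e)) (Finset.mem_univ e)
    have hS0 : 0 ≤ S := Finset.le_inf' _ _ fun e _ => hmin0 e
    obtain ⟨i, hi⟩ := (lamMin_spec hH).1
    obtain ⟨x, hx1, hx2⟩ := eig_attained hH i
    rw [hi, ← hx2, hq]
    calc S = S * ∑ i, 1 * x i ^ 2 := by simp only [one_mul]; rw [← hxx, hx1, mul_one]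
      _ ≤ S * ∑ i, ((Finset.univ.filter fun e => ∃ j, σ e j = i).card : ℝ) * x i ^ 2 := by
          refine mul_le_mul_of_nonneg_left (Finset.sum_le_sum fun i _ => ?_) hS0
          refine mul_le_mul_of_nonneg_right ?_ (sq_nonneg _)
          obtain ⟨e, j, hj⟩ := hcover i
          have : 0 < (Finset.univ.filter fun e => ∃ j, σ e j = i).card :=
            Finset.card_pos.2 ⟨e, by simpa using ⟨j, hj⟩⟩
          exact_mod_cast this
      _ = ∑ e, S * ((x ∘ σ e) ⬝ᵥ (x ∘ σ e)) := by
          rw [← Finset.mul_sum, hcount]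
      _ ≤ _ := by
          refine Finset.sum_le_sum fun e _ => le_trans ?_ (le_quad (hAe e).1 _)
          refine mul_le_mul_of_nonneg_right (hle e) ?_
          exact Finset.sum_nonneg fun j _ => mul_self_nonneg _
end

section
/- Local deflation with uniform cutoff α > 0: let K = Σ_{e=1}^N L_e^T·K_e·L_e with each K_e ∈ ℝ^{m×m} symmetric positive semidefinite, and M = Σ_{e=1}^N L_e^T·M_e·L_e with each M_e ∈ ℝ^{m×m} symmetric positive definite. For each e, let U_{e,2} ∈ ℝ^{m×r} (0 < r < m) satisfy U_{e,2}^T·M_e·U_{e,2} = I_r, set V_e = M_e·U_{e,2} and M̄_e = M_e + α·V_e·V_e^T, and let M̄ = Σ_{e=1}^N L_e^T·M̄_e·L_e. Then for every i = 1,…,n: λ_i(K, M̄) ≤ λ_i(K, M) ≤ (1+α)·λ_i(K, M̄); equivalently, 1 ≤ ω_i/ω̄_i ≤ √(1+α) wherever ω̄_i > 0. -/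
open Matrix

lemma ldcb_diag {n : ℕ} (A B : Matrix (Fin n) (Fin n) ℝ) (hA : A.IsHermitian) (hB : B.PosDef) :
    ∃ W : Matrix (Fin n) (Fin n) ℝ, Wᵀ * B * W = 1 ∧ Wᵀ * A * W = diagonal (genEigs A B) ∧
      Monotone (genEigs A B) := by
  open scoped MatrixOrder in
  set S := CFC.sqrt B with hS
  have hSS : S * S = B := CFC.sqrt_mul_sqrt_self B hB.posSemidef.nonneg
  have hSH : S.IsHermitian := (Matrix.nonneg_iff_posSemidef.1 (CFC.sqrt_nonneg B)).1
  have hdet : IsUnit S.det := by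
    have h := hB.det_pos
    rw [← hSS, det_mul] at h
    exact isUnit_iff_ne_zero.2 (fun h0 => by simp [h0] at h)
  have hSi : (S⁻¹)ᵀ = S⁻¹ := by
    have := hSH.inv
    simpa [IsHermitian, conjTranspose_eq_transpose_of_trivial] using this
  have hC : (S⁻¹ * A * S⁻¹).IsHermitian := by
    have hA' : Aᵀ = A := by simpa [IsHermitian, conjTranspose_eq_transpose_of_trivial] using hA
    simp [IsHermitian, conjTranspose_eq_transpose_of_trivial, transpose_mul, hSi, hA', mul_assoc]
  have hg : genEigs A B = hC.eigenvalues ∘ Tuple.sort hC.eigenvalues := by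
    unfold genEigs sortedEigs
    rw [dif_pos hB, dif_pos hC]
  set p := Tuple.sort hC.eigenvalues with hp
  set U : Matrix (Fin n) (Fin n) ℝ := (hC.eigenvectorUnitary : Matrix (Fin n) (Fin n) ℝ) with hU
  have hUU : Uᵀ * U = 1 := by
    have := Unitary.coe_star_mul_self hC.eigenvectorUnitary
    simpa [star_eq_conjTranspose, conjTranspose_eq_transpose_of_trivial] using this
  have hUD : Uᵀ * (S⁻¹ * A * S⁻¹) * U = diagonal hC.eigenvalues := by
    have h := hC.conjStarAlgAut_star_eigenvectorUnitary
    rw [Unitary.conjStarAlgAut_apply] at h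
    simpa [star_eq_conjTranspose, conjTranspose_eq_transpose_of_trivial, Function.comp_def] using h
  refine ⟨(S⁻¹ * U).submatrix id p, ?_, ?_, ?_⟩
  · have h1 : (S⁻¹ * U)ᵀ * B * (S⁻¹ * U) = 1 := by
      rw [transpose_mul, hSi, ← hSS]
      calc Uᵀ * S⁻¹ * (S * S) * (S⁻¹ * U) = Uᵀ * ((S⁻¹ * S) * (S * S⁻¹)) * U := by
            simp only [mul_assoc]
        _ = 1 := by rw [nonsing_inv_mul _ hdet, mul_nonsing_inv _ hdet]; simp [hUU]
    have h2 := congrArg (fun X => X.submatrix p p) h1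
    simp only [submatrix_one_equiv] at h2
    rw [← h2]; ext i j; simp [mul_apply]
  · have h1 : (S⁻¹ * U)ᵀ * A * (S⁻¹ * U) = diagonal hC.eigenvalues := by
      rw [transpose_mul, hSi, ← hUD]; simp only [mul_assoc]
    have h2 := congrArg (fun X => X.submatrix p p) h1
    simp only [submatrix_diagonal_equiv] at h2
    rw [hg, ← h2]; ext i j; simp [mul_apply]
  · rw [hg]; exact Tuple.monotone_sort _

lemma ldcb_quad {n : ℕ} (W A D : Matrix (Fin n) (Fin n) ℝ) (h : Wᵀ * A * W = D)
    (y : Fin n → ℝ) : (W *ᵥ y) ⬝ᵥ (A *ᵥ (W *ᵥ y)) = y ⬝ᵥ (D *ᵥ y) := by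
  rw [← h, ← mulVec_mulVec, ← mulVec_mulVec, dotProduct_mulVec y, vecMul_transpose]

lemma ldcb_compare {n : ℕ} (A B₁ B₂ W₁ W₂ : Matrix (Fin n) (Fin n) ℝ) (d₁ d₂ : Fin n → ℝ) (c : ℝ)
    (hA : A.PosSemidef) (hc : ∀ x, x ⬝ᵥ (B₁ *ᵥ x) ≤ c * (x ⬝ᵥ (B₂ *ᵥ x)))
    (h1 : W₁ᵀ * B₁ * W₁ = 1) (h1' : W₁ᵀ * A * W₁ = diagonal d₁) (m1 : Monotone d₁)
    (h2 : W₂ᵀ * B₂ * W₂ = 1) (h2' : W₂ᵀ * A * W₂ = diagonal d₂) (m2 : Monotone d₂) (i : Fin n) :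
    d₂ i ≤ c * d₁ i := by
  set T := W₂ᵀ * B₂ * W₁ with hT
  have hTW : W₂ * T = W₁ := by
    have : W₂ * (W₂ᵀ * B₂) = 1 := _root_.mul_eq_one_comm.1 h2
    rw [hT, ← mul_assoc, this, one_mul]
  let f : (Fin n → ℝ) →ₗ[ℝ] ({j // j ≠ i} → ℝ) :=
    LinearMap.pi fun j => if j.1 < i then (LinearMap.proj j.1).comp T.mulVecLin else LinearMap.proj j.1
  have hk : LinearMap.ker f ≠ ⊥ := by
    apply LinearMap.ker_ne_bot_of_finrank_lt
    simp [Module.finrank_pi]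
    exact i.pos
  obtain ⟨y, hy, hy0⟩ := Submodule.exists_mem_ne_zero_of_ne_bot hk
  have hfy : ∀ j : {j // j ≠ i}, f y j = 0 := fun j => by
    rw [LinearMap.mem_ker.1 hy]; rfl
  set z := T *ᵥ y with hz
  have hyj : ∀ j, i < j → y j = 0 := fun j hj => by
    have := hfy ⟨j, hj.ne'⟩
    simpa [f, not_lt.2 hj.le] using this
  have hzj : ∀ j, j < i → z j = 0 := fun j hj => by
    have := hfy ⟨j, hj.ne⟩
    simpa [f, hj] using this
  have hx : W₁ *ᵥ y = W₂ *ᵥ z := by rw [hz, mulVec_mulVec, hTW]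
  have e1 := ldcb_quad W₁ B₁ _ h1 y
  have e1' := ldcb_quad W₁ A _ h1' y
  have e2 := ldcb_quad W₂ B₂ _ h2 z
  have e2' := ldcb_quad W₂ A _ h2' z
  have hcx := hc (W₁ *ᵥ y)
  rw [e1, hx, e2, one_mulVec, one_mulVec] at hcx
  rw [hx, e2'] at e1'
  have hd : 0 ≤ d₁ i := by
    have := hA.conjTranspose_mul_mul_same W₁
    rw [conjTranspose_eq_transpose_of_trivial, h1'] at this
    exact posSemidef_diagonal_iff.1 this i
  have hyy : 0 < y ⬝ᵥ y := by
    have := dotProduct_star_self_pos_iff.2 hy0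
    simpa using this
  have hzz0 : 0 ≤ z ⬝ᵥ z := by
    have := dotProduct_star_self_nonneg z
    simpa using this
  have hzz : 0 < z ⬝ᵥ z := by
    rcases hzz0.lt_or_eq with h | h
    · exact h
    · rw [← h] at hcx; linarith
  have up : y ⬝ᵥ (diagonal d₁ *ᵥ y) ≤ d₁ i * (y ⬝ᵥ y) := by
    simp only [dotProduct, mulVec_diagonal, Finset.mul_sum]
    refine Finset.sum_le_sum fun j _ => ?_
    rcases lt_or_ge i j with h | h
    · simp [hyj j h]
    · nlinarith [m1 h, mul_self_nonneg (y j)]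
  have lo : d₂ i * (z ⬝ᵥ z) ≤ z ⬝ᵥ (diagonal d₂ *ᵥ z) := by
    simp only [dotProduct, mulVec_diagonal, Finset.mul_sum]
    refine Finset.sum_le_sum fun j _ => ?_
    rcases lt_or_ge j i with h | h
    · simp [hzj j h]
    · nlinarith [m2 h, mul_self_nonneg (z j)]
  have : d₂ i * (z ⬝ᵥ z) ≤ (c * d₁ i) * (z ⬝ᵥ z) := by
    nlinarith [mul_le_mul_of_nonneg_left hcx hd]
  exact le_of_mul_le_mul_right this hzz

lemma ldcb_genEigs_le {n : ℕ} (A B₁ B₂ : Matrix (Fin n) (Fin n) ℝ) (c : ℝ)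
    (hA : A.PosSemidef) (hB₁ : B₁.PosDef) (hB₂ : B₂.PosDef) (hc : (c • B₂ - B₁).PosSemidef)
    (i : Fin n) : 0 ≤ genEigs A B₁ i ∧ genEigs A B₂ i ≤ c * genEigs A B₁ i := by
  obtain ⟨W₁, h1, h1', m1⟩ := ldcb_diag A B₁ hA.1 hB₁
  obtain ⟨W₂, h2, h2', m2⟩ := ldcb_diag A B₂ hA.1 hB₂
  constructor
  · have := hA.conjTranspose_mul_mul_same W₁
    rw [conjTranspose_eq_transpose_of_trivial, h1'] at this
    exact posSemidef_diagonal_iff.1 this i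
  · refine ldcb_compare A B₁ B₂ W₁ W₂ _ _ c hA (fun x => ?_) h1 h1' m1 h2 h2' m2 i
    have := hc.dotProduct_mulVec_nonneg x
    simp only [star_trivial, sub_mulVec, smul_mulVec, dotProduct_sub, dotProduct_smul,
      smul_eq_mul] at this
    linarith

lemma ldcb_psd {N m n : ℕ} (σ : Fin N → Fin m → Fin n) (A : Fin N → Matrix (Fin m) (Fin m) ℝ)
    (hA : ∀ e, (A e).PosSemidef) : (∑ e, (elemL (σ e))ᵀ * A e * elemL (σ e)).PosSemidef := by
  refine posSemidef_sum _ fun e _ => ?_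
  simpa [conjTranspose_eq_transpose_of_trivial] using
    (hA e).conjTranspose_mul_mul_same (elemL (σ e))

lemma ldcb_elemL {m n : ℕ} (σ : Fin m → Fin n) (x : Fin n → ℝ) : elemL σ *ᵥ x = x ∘ σ := by
  ext j; simp [elemL, mulVec, dotProduct]

lemma ldcb_pd {N m n : ℕ} (σ : Fin N → Fin m → Fin n) (A : Fin N → Matrix (Fin m) (Fin m) ℝ)
    (hcover : ∀ i, ∃ e j, σ e j = i)
    (hA : ∀ e, (A e).PosDef) : (∑ e, (elemL (σ e))ᵀ * A e * elemL (σ e)).PosDef := by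
  refine PosDef.of_dotProduct_mulVec_pos (ldcb_psd σ A fun e => (hA e).posSemidef).1 fun x hx => ?_
  have key : ∀ e, x ⬝ᵥ (((elemL (σ e))ᵀ * A e * elemL (σ e)) *ᵥ x)
      = (x ∘ σ e) ⬝ᵥ (A e *ᵥ (x ∘ σ e)) := fun e => by
    rw [← mulVec_mulVec, ← mulVec_mulVec, dotProduct_mulVec x, vecMul_transpose, ldcb_elemL]
  rw [star_trivial, sum_mulVec, dotProduct_sum]
  simp only [key]
  obtain ⟨i, hi⟩ := Function.ne_iff.1 hx
  obtain ⟨e, j, rfl⟩ := hcover i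
  refine Finset.sum_pos' (fun e _ => ?_) ⟨e, Finset.mem_univ _, ?_⟩
  · simpa using (hA e).posSemidef.dotProduct_mulVec_nonneg (x ∘ σ e)
  · have : x ∘ σ e ≠ 0 := fun h => hi (congrFun h j)
    simpa using (hA e).dotProduct_mulVec_pos this

/-- **Local deflation with a uniform cutoff `α > 0`.**
Let `K = Σ_e L_eᵀ·K_e·L_e` with `K_e ⪰ 0` symmetric and `M = Σ_e L_eᵀ·M_e·L_e` with `M_e ≻ 0`
symmetric. For each `e`, let `U_{e,2} ∈ ℝ^{m×r}` (`0 < r < m`) be `M_e`-orthonormal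
(`U_{e,2}ᵀ·M_e·U_{e,2} = I_r`), set `V_e = M_e·U_{e,2}`, `M̄_e = M_e + α·V_e·V_eᵀ` and
`M̄ = Σ_e L_eᵀ·M̄_e·L_e`. Then for every `i`:
`λ_i(K,M̄) ≤ λ_i(K,M) ≤ (1+α)·λ_i(K,M̄)`; equivalently `1 ≤ ω_i/ω̄_i ≤ √(1+α)`
wherever `ω̄_i > 0`. -/
theorem local_deflation_cutoff_bounds {N m n pmax r : ℕ} (hpmax : 0 < pmax)
    (hr : 0 < r) (hrm : r < m + 1)
    (α : ℝ) (hα : 0 < α)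
    (σ : Fin (N+1) → Fin (m+1) → Fin (n+1))
    (hinj : ∀ e, Function.Injective (σ e))
    (hcover : ∀ i : Fin (n+1), ∃ e j, σ e j = i)
    (hp : ∀ i : Fin (n+1), (Finset.univ.filter fun e => ∃ j, σ e j = i).card ≤ pmax)
    (Ke Me : Fin (N+1) → Matrix (Fin (m+1)) (Fin (m+1)) ℝ)
    (hKe : ∀ e, (Ke e).PosSemidef) (hMe : ∀ e, (Me e).PosDef)
    (U2 : Fin (N+1) → Matrix (Fin (m+1)) (Fin r) ℝ)
    (hU2 : ∀ e, (U2 e)ᵀ * Me e * U2 e = 1)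
    (Ve : Fin (N+1) → Matrix (Fin (m+1)) (Fin r) ℝ)
    (hVe : ∀ e, Ve e = Me e * U2 e)
    (Mbare : Fin (N+1) → Matrix (Fin (m+1)) (Fin (m+1)) ℝ)
    (hMbare : ∀ e, Mbare e = Me e + α • (Ve e * (Ve e)ᵀ))
    (K M Mbar : Matrix (Fin (n+1)) (Fin (n+1)) ℝ)
    (hK : K = ∑ e, (elemL (σ e))ᵀ * Ke e * elemL (σ e))
    (hM : M = ∑ e, (elemL (σ e))ᵀ * Me e * elemL (σ e))
    (hMbar : Mbar = ∑ e, (elemL (σ e))ᵀ * Mbare e * elemL (σ e)) :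
    ∀ i : Fin (n+1),
      (genEigs K Mbar i ≤ genEigs K M i ∧ genEigs K M i ≤ (1 + α) * genEigs K Mbar i) ∧
      (0 < genEigs K Mbar i →
        1 ≤ Real.sqrt (genEigs K M i) / Real.sqrt (genEigs K Mbar i) ∧
        Real.sqrt (genEigs K M i) / Real.sqrt (genEigs K Mbar i) ≤ Real.sqrt (1 + α)) := by
  intro i
  have hVV : ∀ e, (Ve e * (Ve e)ᵀ).PosSemidef := fun e => by
    simpa [conjTranspose_eq_transpose_of_trivial] using posSemidef_self_mul_conjTranspose (Ve e)
  have hMV : ∀ e, (Me e - Ve e * (Ve e)ᵀ).PosSemidef := fun e => by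
    have hMt : (Me e)ᵀ = Me e := by
      simpa [IsHermitian, conjTranspose_eq_transpose_of_trivial] using (hMe e).1
    have h := (hMe e).posSemidef.conjTranspose_mul_mul_same (1 - U2 e * (Ve e)ᵀ)
    have hU : (U2 e)ᵀ * (Me e * U2 e) = 1 := by rw [← Matrix.mul_assoc]; exact hU2 e
    have h3 : (U2 e)ᵀ * Me e = (Ve e)ᵀ := by rw [hVe, transpose_mul, hMt]
    have h4 : (Ve e)ᵀ * U2 e = 1 := by rw [← h3]; exact hU2 e
    convert h using 1
    rw [conjTranspose_eq_transpose_of_trivial, transpose_sub, transpose_one, transpose_mul,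
      transpose_transpose, Matrix.sub_mul, Matrix.one_mul, Matrix.mul_assoc (Ve e), h3,
      Matrix.mul_sub, Matrix.mul_one, Matrix.sub_mul, ← Matrix.mul_assoc (Me e), ← hVe,
      Matrix.mul_assoc (Ve e) _ (U2 e * _), ← Matrix.mul_assoc _ (U2 e), h4, Matrix.one_mul]
    abel
  have hMbe : ∀ e, (Mbare e).PosDef := fun e => by
    rw [hMbare]; exact (hMe e).add_posSemidef ((hVV e).smul hα.le)
  have hKp : K.PosSemidef := by rw [hK]; exact ldcb_psd σ Ke hKe
  have hMp : M.PosDef := by rw [hM]; exact ldcb_pd σ Me hcover hMe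
  have hMbp : Mbar.PosDef := by rw [hMbar]; exact ldcb_pd σ Mbare hcover hMbe
  have c1 : ((1 : ℝ) • Mbar - M).PosSemidef := by
    have := ldcb_psd σ (fun e => α • (Ve e * (Ve e)ᵀ)) fun e => (hVV e).smul hα.le
    convert this using 1
    rw [hMbar, hM, one_smul, ← Finset.sum_sub_distrib]
    refine Finset.sum_congr rfl fun e _ => ?_
    rw [← Matrix.sub_mul, ← Matrix.mul_sub, hMbare, add_sub_cancel_left]
  have c2 : ((1 + α) • M - Mbar).PosSemidef := by
    have := ldcb_psd σ (fun e => α • (Me e - Ve e * (Ve e)ᵀ)) fun e => (hMV e).smul hα.le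
    convert this using 1
    rw [hMbar, hM, Finset.smul_sum, ← Finset.sum_sub_distrib]
    refine Finset.sum_congr rfl fun e _ => ?_
    rw [← Matrix.smul_mul, ← Matrix.mul_smul, ← Matrix.sub_mul, ← Matrix.mul_sub, hMbare, add_smul, one_smul, smul_sub,
      add_sub_add_left_eq_sub]
  obtain ⟨_, b1⟩ := ldcb_genEigs_le K M Mbar 1 hKp hMp hMbp c1 i
  obtain ⟨_, b2⟩ := ldcb_genEigs_le K Mbar M (1 + α) hKp hMbp hMp c2 i
  rw [_root_.one_mul] at b1
  refine ⟨⟨b1, b2⟩, fun hpos => ?_⟩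
  have hs := Real.sqrt_pos.2 hpos
  refine ⟨(one_le_div hs).2 (Real.sqrt_le_sqrt b1), (div_le_iff₀ hs).2 ?_⟩
  rw [← Real.sqrt_mul (by linarith)]
  exact Real.sqrt_le_sqrt b2
end
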